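/- Let p be a probability distribution on ℝ^d with supp(p) ⊂ B_R(0), mean μ, and covariance Σ. Let m_σ(x) := E[X | X + σZ = x] be the optimal denoiser of p at noise level σ (with X ~ p, Z ~ N(0,I_d) independent), and let m_σ^G(x) := μ + Σ(Σ + σ²I)^{-1}(x − μ) be the optimal denoiser of the Gaussian N(μ, Σ). Then for any δ ∈ (0,1) there exist σ_0 > 0 with 1/(1+σ_0) ≤ δ and a bounded function H on the closed ball B̄_R(0) × [σ_0, ∞) with values in ℝ^d, obtained by composing a continuous bounded function on B̄_R(0) × [−δ, δ] with (x,σ) ↦ (x/(1+σ), 1/(1+σ)), such that m_σ(x) = m_σ^G(x) + H(x,σ)(1+σ)^{−2} for all x ∈ B̄_R(0) and σ ≥ σ_0. -/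

import Mathlib

open MeasureTheory ProbabilityTheory

noncomputable section

/-- The mean `μ = E_{X ~ p}[X]` of a measure `p` on `ℝ^d`. -/
def meanVec {d : ℕ} (p : Measure (EuclideanSpace ℝ (Fin d))) : EuclideanSpace ℝ (Fin d) :=
  ∫ y, y ∂p

/-- The covariance matrix `Σ = E[(X − μ)(X − μ)^T]` of a measure `p` on `ℝ^d`. -/
def covMatrix {d : ℕ} (p : Measure (EuclideanSpace ℝ (Fin d))) :
    Matrix (Fin d) (Fin d) ℝ :=
  Matrix.of fun i j => ∫ y, (y i - meanVec p i) * (y j - meanVec p j) ∂p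

/-- The optimal denoiser `m_σ(x) = E[X | X + σZ = x]` of `p` at noise level `σ`, given by the
posterior-mean formula
`m_σ(x) = (∫ e^{−‖x−y‖²/(2σ²)} dp(y))⁻¹ ∫ e^{−‖x−y‖²/(2σ²)} y dp(y)`. -/
def mSig {d : ℕ} (p : Measure (EuclideanSpace ℝ (Fin d))) (σ : ℝ)
    (x : EuclideanSpace ℝ (Fin d)) : EuclideanSpace ℝ (Fin d) :=
  (∫ y, Real.exp (-‖x - y‖ ^ 2 / (2 * σ ^ 2)) ∂p)⁻¹ •
    ∫ y, Real.exp (-‖x - y‖ ^ 2 / (2 * σ ^ 2)) • y ∂p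

/-- The optimal denoiser `m_σ^G(x) = μ + Σ(Σ + σ²I)⁻¹(x − μ)` of the Gaussian `N(μ, Σ)`. -/
def mSigG {d : ℕ} (μv : EuclideanSpace ℝ (Fin d)) (S : Matrix (Fin d) (Fin d) ℝ) (σ : ℝ)
    (x : EuclideanSpace ℝ (Fin d)) : EuclideanSpace ℝ (Fin d) :=
  μv + Matrix.toEuclideanLin (S * (S + σ ^ 2 • (1 : Matrix (Fin d) (Fin d) ℝ))⁻¹) (x - μv)

/-- The exponential has a continuous second-order Taylor remainder factor. -/
lemma exists_continuous_exp_eq :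
    ∃ φ : ℝ → ℝ, Continuous φ ∧ ∀ z, Real.exp z = 1 + z + z ^ 2 * φ z := by
  refine ⟨Function.update (fun z => (Real.exp z - 1 - z) / z ^ 2) 0 (1 / 2), ?_, fun z => ?_⟩
  · rw [continuous_iff_continuousAt]
    intro z
    rcases eq_or_ne z 0 with rfl | hz
    · rw [continuousAt_update_same]
      have h := ((Real.exp_sub_sum_range_succ_isLittleO_pow 2).tendsto_div_nhds_zero.mono_left
        (nhdsWithin_le_nhds (s := {0}ᶜ))).add_const (1 / 2 : ℝ)
      rw [zero_add] at h
      refine h.congr' ?_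
      filter_upwards [self_mem_nhdsWithin] with z hz
      have hz : z ≠ 0 := hz
      simp only [Finset.sum_range_succ, Finset.sum_range_zero, Nat.factorial]
      field_simp
      norm_num
      ring
    · rw [continuousAt_update_of_ne hz]
      exact ContinuousAt.div (by fun_prop) (by fun_prop) (by positivity)
  · rcases eq_or_ne z 0 with rfl | hz
    · simp
    · rw [Function.update_of_ne hz]
      field_simp
      ring

section CompactlySupported

variable {Y F : Type*} [TopologicalSpace Y] [MeasurableSpace Y]
  [OpensMeasurableSpace Y] [NormedAddCommGroup F]
  {p : Measure Y} [IsFiniteMeasure p] {K : Set Y}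

lemma integrable_of_continuous_of_measure_compl_eq_zero [T2Space Y] (hK : IsCompact K)
    (hp : p Kᶜ = 0) {f : Y → F} (hf : Continuous f) : Integrable f p := by
  rw [← Measure.restrict_eq_self_of_ae_mem (s := K) (mem_ae_iff.2 hp)]
  exact hf.continuousOn.integrableOn_compact' hK hK.measurableSet

lemma continuous_integral_of_measure_compl_eq_zero [NormedSpace ℝ F] [SecondCountableTopologyEither Y F]
    {X : Type*} [TopologicalSpace X] [FirstCountableTopology X] [LocallyCompactSpace X] (hK : IsCompact K) (hp : p Kᶜ = 0)
    {f : X → Y → F} (hf : Continuous f.uncurry) : Continuous fun x => ∫ y, f x y ∂p := by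
  rw [← Measure.restrict_eq_self_of_ae_mem (s := K) (mem_ae_iff.2 hp)]
  exact continuous_parametric_integral_of_continuous hf hK

end CompactlySupported

section Covariance

variable {d : ℕ} {p : Measure (EuclideanSpace ℝ (Fin d))} [IsProbabilityMeasure p]
  {K : Set (EuclideanSpace ℝ (Fin d))}

lemma integral_sub_meanVec (hK : IsCompact K) (hp : p Kᶜ = 0) :
    ∫ y, (y - meanVec p) ∂p = 0 := by
  rw [integral_sub (integrable_of_continuous_of_measure_compl_eq_zero hK hp continuous_id')
    (integrable_const _)]
  simp [meanVec]

lemma toEuclideanLin_covMatrix_apply (hK : IsCompact K) (hp : p Kᶜ = 0)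
    (v : EuclideanSpace ℝ (Fin d)) :
    Matrix.toEuclideanLin (covMatrix p) v
      = ∫ y, inner ℝ v (y - meanVec p) • (y - meanVec p) ∂p := by
  have hint : Integrable (fun y => inner ℝ v (y - meanVec p) • (y - meanVec p)) p :=
    integrable_of_continuous_of_measure_compl_eq_zero hK hp (by fun_prop)
  ext i
  have h := (EuclideanSpace.proj (𝕜 := ℝ) i).integral_comp_comm hint
  simp only [PiLp.proj_apply] at h
  rw [← h, Matrix.toLpLin_apply]
  simp only [Matrix.mulVec, dotProduct, covMatrix, Matrix.of_apply, PiLp.smul_apply, smul_eq_mul,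
    PiLp.inner_apply, PiLp.sub_apply, ← integral_mul_const, Finset.sum_mul]
  rw [integral_finsetSum]
  · refine Finset.sum_congr rfl fun j _ => integral_congr_ae (.of_forall fun y => ?_)
    simp
    ring
  · exact fun j _ => integrable_of_continuous_of_measure_compl_eq_zero hK hp (by fun_prop)

lemma toEuclideanLin_covMatrix_apply' (hK : IsCompact K) (hp : p Kᶜ = 0)
    (v : EuclideanSpace ℝ (Fin d)) :
    Matrix.toEuclideanLin (covMatrix p) v = ∫ y, inner ℝ v y • (y - meanVec p) ∂p := by
  rw [toEuclideanLin_covMatrix_apply hK hp]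
  simp only [inner_sub_right, sub_smul]
  rw [integral_sub, integral_smul, integral_sub_meanVec hK hp, smul_zero, sub_zero]
  all_goals exact integrable_of_continuous_of_measure_compl_eq_zero hK hp (by fun_prop)

lemma posSemidef_covMatrix (hK : IsCompact K) (hp : p Kᶜ = 0) : (covMatrix p).PosSemidef := by
  refine .of_dotProduct_mulVec_nonneg ?_ fun v => ?_
  · ext i j
    simp [covMatrix, mul_comm]
  · have hint : Integrable
        (fun y => inner ℝ (WithLp.toLp 2 v) (y - meanVec p) • (y - meanVec p)) p :=
      integrable_of_continuous_of_measure_compl_eq_zero hK hp (by fun_prop)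
    have h : dotProduct (star v) ((covMatrix p).mulVec v)
        = inner ℝ (WithLp.toLp 2 v) (Matrix.toEuclideanLin (covMatrix p) (WithLp.toLp 2 v)) := by
      rw [Matrix.toLpLin_apply, EuclideanSpace.inner_eq_star_dotProduct, dotProduct_comm]
    rw [h, toEuclideanLin_covMatrix_apply hK hp, ← integral_inner hint]
    refine integral_nonneg fun y => ?_
    simp only [inner_smul_right, Pi.zero_apply]
    exact mul_self_nonneg _

lemma isUnit_det_one_add_covMatrix (hK : IsCompact K) (hp : p Kᶜ = 0) (s : ℝ) :
    IsUnit (1 + s ^ 2 • covMatrix p).det :=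
  (Matrix.isUnit_iff_isUnit_det _).1
    (Matrix.PosDef.one.add_posSemidef ((posSemidef_covMatrix hK hp).smul (sq_nonneg s))).isUnit

lemma continuous_one_add_covMatrix_inv (hK : IsCompact K) (hp : p Kᶜ = 0) :
    Continuous fun s : ℝ => (1 + s ^ 2 • covMatrix p)⁻¹ := by
  have hc : Continuous fun s : ℝ => 1 + s ^ 2 • covMatrix p := by fun_prop
  simp only [Matrix.inv_def, Ring.inverse_eq_inv']
  exact (hc.matrix_det.inv₀ fun s => (isUnit_det_one_add_covMatrix hK hp s).ne_zero).smul
    hc.matrix_adjugate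

/-- The Gaussian denoiser up to second order in `1 / σ`, with explicit remainder. -/
lemma mSigG_eq (hK : IsCompact K) (hp : p Kᶜ = 0) {σ : ℝ} (hσ : σ ≠ 0)
    (x : EuclideanSpace ℝ (Fin d)) :
    mSigG (meanVec p) (covMatrix p) σ x = meanVec p
      + σ⁻¹ ^ 2 • Matrix.toEuclideanLin (covMatrix p) x
      - σ⁻¹ ^ 2 • Matrix.toEuclideanLin (covMatrix p) (meanVec p)
      - σ⁻¹ ^ 2 • Matrix.toEuclideanLin
          (covMatrix p * covMatrix p * (1 + σ⁻¹ ^ 2 • covMatrix p)⁻¹)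
          (σ⁻¹ ^ 2 • (x - meanVec p)) := by
  have hA := isUnit_det_one_add_covMatrix hK hp σ⁻¹
  unfold mSigG
  generalize covMatrix p = S at *
  generalize meanVec p = m at *
  have hinv : (S + σ ^ 2 • (1 : Matrix (Fin d) (Fin d) ℝ))⁻¹
      = σ⁻¹ ^ 2 • (1 + σ⁻¹ ^ 2 • S)⁻¹ := by
    refine Matrix.inv_eq_right_inv ?_
    have h : S + σ ^ 2 • (1 : Matrix (Fin d) (Fin d) ℝ) = σ ^ 2 • (1 + σ⁻¹ ^ 2 • S) := by
      rw [smul_add, smul_smul, ← mul_pow, mul_inv_cancel₀ hσ, one_pow, one_smul, add_comm]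
    rw [h, smul_mul_smul_comm, Matrix.mul_nonsing_inv _ hA, ← mul_pow, mul_inv_cancel₀ hσ, one_pow,
      one_smul]
  have hsplit : S * (1 + σ⁻¹ ^ 2 • S)⁻¹
      = S - σ⁻¹ ^ 2 • (S * S * (1 + σ⁻¹ ^ 2 • S)⁻¹) := by
    have h := Matrix.mul_nonsing_inv _ hA
    rw [add_mul, one_mul, smul_mul_assoc] at h
    rw [eq_sub_iff_add_eq, mul_assoc, ← mul_smul_comm, ← mul_add, h, mul_one]
  rw [hinv, mul_smul_comm, hsplit]
  simp only [map_sub, map_smul, LinearMap.sub_apply, LinearMap.smul_apply]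
  module

end Covariance

section Denoiser

variable {d : ℕ} {p : Measure (EuclideanSpace ℝ (Fin d))}
  {K : Set (EuclideanSpace ℝ (Fin d))}

/-- The factor `exp (-‖x‖² / (2σ²))` cancels in the posterior mean. -/
lemma mSig_eq_tilted (σ : ℝ) (x : EuclideanSpace ℝ (Fin d)) :
    mSig p σ x = (∫ y, Real.exp (σ⁻¹ ^ 2 * (inner ℝ x y - ‖y‖ ^ 2 / 2)) ∂p)⁻¹ •
      ∫ y, Real.exp (σ⁻¹ ^ 2 * (inner ℝ x y - ‖y‖ ^ 2 / 2)) • y ∂p := by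
  have h : ∀ y, Real.exp (-‖x - y‖ ^ 2 / (2 * σ ^ 2))
      = Real.exp (-(σ⁻¹ ^ 2 * (‖x‖ ^ 2 / 2)))
        * Real.exp (σ⁻¹ ^ 2 * (inner ℝ x y - ‖y‖ ^ 2 / 2)) := by
    intro y
    rw [← Real.exp_add, norm_sub_sq_real, div_eq_mul_inv, mul_inv, ← inv_pow]
    ring_nf
  simp only [mSig, h, mul_smul]
  rw [integral_const_mul, integral_smul, smul_smul, mul_inv, mul_right_comm,
    inv_mul_cancel₀ (Real.exp_ne_zero _), one_mul]

variable [IsProbabilityMeasure p]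

/-- The mean of `p` tilted by `exp (t * a)`, up to second order in `t` with explicit remainder. -/
lemma tilted_mean_eq (hK : IsCompact K) (hp : p Kᶜ = 0) {φ : ℝ → ℝ} (hφ : Continuous φ)
    (hexp : ∀ z, Real.exp z = 1 + z + z ^ 2 * φ z) {a : EuclideanSpace ℝ (Fin d) → ℝ}
    (ha : Continuous a) (t : ℝ) :
    (∫ y, Real.exp (t * a y) ∂p)⁻¹ • ∫ y, Real.exp (t * a y) • y ∂p
      = meanVec p + t • ∫ y, a y • (y - meanVec p) ∂p
        + t ^ 2 • (∫ y, Real.exp (t * a y) ∂p)⁻¹ •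
          ((∫ y, (a y ^ 2 * φ (t * a y)) • (y - meanVec p) ∂p)
            - (∫ y, (a y + t * (a y ^ 2 * φ (t * a y))) ∂p) •
              ∫ y, a y • (y - meanVec p) ∂p) := by
  have hint {F : Type} [NormedAddCommGroup F] {f : EuclideanSpace ℝ (Fin d) → F}
      (hf : Continuous f) : Integrable f p :=
    integrable_of_continuous_of_measure_compl_eq_zero hK hp hf
  have hD : (∫ y, Real.exp (t * a y) ∂p) ≠ 0 := (integral_exp_pos (hint (by fun_prop))).ne'
  have hB : ∫ y, Real.exp (t * a y) ∂p
      = 1 + t * ∫ y, (a y + t * (a y ^ 2 * φ (t * a y))) ∂p := by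
    have h : ∀ y, Real.exp (t * a y) = 1 + t * (a y + t * (a y ^ 2 * φ (t * a y))) := by
      intro y
      rw [hexp (t * a y)]
      ring
    simp only [h]
    rw [integral_add (integrable_const _) (hint (by fun_prop)), integral_const_mul]
    simp
  have hN : ∫ y, Real.exp (t * a y) • y ∂p = (∫ y, Real.exp (t * a y) ∂p) • meanVec p
      + t • (∫ y, a y • (y - meanVec p) ∂p)
      + t ^ 2 • ∫ y, (a y ^ 2 * φ (t * a y)) • (y - meanVec p) ∂p := by
    have h : ∀ y, Real.exp (t * a y) • y = Real.exp (t * a y) • meanVec p + (y - meanVec p)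
        + t • a y • (y - meanVec p) + t ^ 2 • (a y ^ 2 * φ (t * a y)) • (y - meanVec p) := by
      intro y
      rw [hexp (t * a y)]
      module
    simp only [h]
    rw [integral_add (hint (by fun_prop)) (hint (by fun_prop)),
      integral_add (hint (by fun_prop)) (hint (by fun_prop)),
      integral_add (hint (by fun_prop)) (hint (by fun_prop)), integral_smul, integral_smul,
      integral_smul_const, integral_sub_meanVec hK hp, add_zero]
  rw [hN]
  generalize (∫ y, Real.exp (t * a y) ∂p) = D at *
  generalize (∫ y, (a y + t * (a y ^ 2 * φ (t * a y))) ∂p) = B at *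
  generalize (∫ y, a y • (y - meanVec p) ∂p) = L at *
  have hBD : t * D⁻¹ = t - t ^ 2 * (D⁻¹ * B) := by
    field_simp
    rw [hB]
    ring
  rw [smul_add, smul_add, smul_smul, inv_mul_cancel₀ hD, smul_smul, mul_comm D⁻¹ t, hBD]
  module

lemma integral_inner_sub_sq_smul (hK : IsCompact K) (hp : p Kᶜ = 0)
    (u : EuclideanSpace ℝ (Fin d)) (c t : ℝ) :
    ∫ y, (c * (inner ℝ u y - t * (‖y‖ ^ 2 / 2))) • (y - meanVec p) ∂p
      = c • Matrix.toEuclideanLin (covMatrix p) u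
        - (c * t) • ∫ y, (‖y‖ ^ 2 / 2) • (y - meanVec p) ∂p := by
  rw [toEuclideanLin_covMatrix_apply' hK hp, ← integral_smul, ← integral_smul, ← integral_sub]
  · refine integral_congr_ae (.of_forall fun y => ?_)
    module
  all_goals exact integrable_of_continuous_of_measure_compl_eq_zero hK hp (by fun_prop)

/-- The exponent of the tilted weight, divided by `t`, as a function of `q = (u, t, e)` with
`u = x / (1 + σ)`, `t = 1 / (1 + σ)` and `e = 1 / (1 - t)`. -/
def tiltExponent (q : EuclideanSpace ℝ (Fin d) × ℝ × ℝ) (y : EuclideanSpace ℝ (Fin d)) : ℝ :=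
  q.2.2 ^ 2 * (inner ℝ q.1 y - q.2.1 * (‖y‖ ^ 2 / 2))

lemma continuous_tiltExponent :
    Continuous fun r : (EuclideanSpace ℝ (Fin d) × ℝ × ℝ) × EuclideanSpace ℝ (Fin d) =>
      tiltExponent r.1 r.2 := by
  unfold tiltExponent
  fun_prop

/-- The excess of the denoiser over the Gaussian one, as a function of `q = (u, t, e)` with
`u = x / (1 + σ)`, `t = 1 / (1 + σ)` and `e = 1 / (1 - t)`, where `φ` is the second-order remainder
factor of `exp`. -/
def denoiserExcess (p : Measure (EuclideanSpace ℝ (Fin d))) (φ : ℝ → ℝ)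
    (q : EuclideanSpace ℝ (Fin d) × ℝ × ℝ) : EuclideanSpace ℝ (Fin d) :=
  (∫ y, Real.exp (q.2.1 * tiltExponent q y) ∂p)⁻¹ •
      ((∫ y, (tiltExponent q y ^ 2 * φ (q.2.1 * tiltExponent q y)) • (y - meanVec p) ∂p)
        - (∫ y, (tiltExponent q y
            + q.2.1 * (tiltExponent q y ^ 2 * φ (q.2.1 * tiltExponent q y))) ∂p) •
          ∫ y, tiltExponent q y • (y - meanVec p) ∂p)
    - q.2.2 ^ 2 • (∫ y, (‖y‖ ^ 2 / 2) • (y - meanVec p) ∂p)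
    + q.2.2 ^ 2 • Matrix.toEuclideanLin (covMatrix p) (meanVec p)
    + q.2.2 ^ 2 • Matrix.toEuclideanLin
        (covMatrix p * covMatrix p * (1 + (q.2.1 * q.2.2) ^ 2 • covMatrix p)⁻¹)
        ((q.2.1 * q.2.2 ^ 2) • q.1 - (q.2.1 * q.2.2) ^ 2 • meanVec p)

lemma continuous_denoiserExcess (hK : IsCompact K) (hp : p Kᶜ = 0) {φ : ℝ → ℝ}
    (hφ : Continuous φ) : Continuous (denoiserExcess p φ) := by
  have hcont {F : Type} [NormedAddCommGroup F] [NormedSpace ℝ F]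
      {f : EuclideanSpace ℝ (Fin d) × ℝ × ℝ → EuclideanSpace ℝ (Fin d) → F}
      (hf : Continuous fun r : _ × _ => f r.1 r.2) : Continuous fun q => ∫ y, f q y ∂p :=
    continuous_integral_of_measure_compl_eq_zero hK hp hf
  have ha := continuous_tiltExponent (d := d)
  have hD : Continuous fun q : EuclideanSpace ℝ (Fin d) × ℝ × ℝ =>
      (∫ y, Real.exp (q.2.1 * tiltExponent q y) ∂p)⁻¹ := by
    refine (hcont (by fun_prop)).inv₀ fun q => (integral_exp_pos
      (integrable_of_continuous_of_measure_compl_eq_zero hK hp ?_)).ne'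
    have := ha.comp (Continuous.prodMk_right q)
    fun_prop
  have hN : Continuous fun q : EuclideanSpace ℝ (Fin d) × ℝ × ℝ =>
      ∫ y, (tiltExponent q y ^ 2 * φ (q.2.1 * tiltExponent q y)) • (y - meanVec p) ∂p :=
    hcont (by fun_prop)
  have hB : Continuous fun q : EuclideanSpace ℝ (Fin d) × ℝ × ℝ =>
      ∫ y, (tiltExponent q y
        + q.2.1 * (tiltExponent q y ^ 2 * φ (q.2.1 * tiltExponent q y))) ∂p :=
    hcont (by fun_prop)
  have hL : Continuous fun q : EuclideanSpace ℝ (Fin d) × ℝ × ℝ =>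
      ∫ y, tiltExponent q y • (y - meanVec p) ∂p := hcont (by fun_prop)
  have hA : Continuous fun q : EuclideanSpace ℝ (Fin d) × ℝ × ℝ =>
      (1 + (q.2.1 * q.2.2) ^ 2 • covMatrix p)⁻¹ :=
    (continuous_one_add_covMatrix_inv hK hp).comp
      (f := fun q : EuclideanSpace ℝ (Fin d) × ℝ × ℝ => q.2.1 * q.2.2) (by fun_prop)
  have hG : Continuous fun q : EuclideanSpace ℝ (Fin d) × ℝ × ℝ => Matrix.toEuclideanLin
      (covMatrix p * covMatrix p * (1 + (q.2.1 * q.2.2) ^ 2 • covMatrix p)⁻¹)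
      ((q.2.1 * q.2.2 ^ 2) • q.1 - (q.2.1 * q.2.2) ^ 2 • meanVec p) := by
    simp only [Matrix.toLpLin_apply]
    exact (PiLp.continuous_toLp 2 _).comp
      ((continuous_const.matrix_mul hA).matrix_mulVec (by fun_prop))
  have he : Continuous fun q : EuclideanSpace ℝ (Fin d) × ℝ × ℝ => q.2.2 ^ 2 := by fun_prop
  unfold denoiserExcess
  exact (((hD.smul (hN.sub (hB.smul hL))).sub (he.smul continuous_const)).add
    (he.smul continuous_const)).add (he.smul hG)

lemma mSig_eq_mSigG_add (hK : IsCompact K) (hp : p Kᶜ = 0) {φ : ℝ → ℝ} (hφ : Continuous φ)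
    (hexp : ∀ z, Real.exp z = 1 + z + z ^ 2 * φ z) {σ : ℝ} (hσ : 0 < σ)
    (x : EuclideanSpace ℝ (Fin d)) :
    mSig p σ x = mSigG (meanVec p) (covMatrix p) σ x + ((1 + σ) ^ 2)⁻¹ •
      denoiserExcess p φ ((1 + σ)⁻¹ • x, (1 + σ)⁻¹, (1 - (1 + σ)⁻¹)⁻¹) := by
  have he : (1 - (1 + σ)⁻¹)⁻¹ = (1 + σ) * σ⁻¹ := by
    have := hσ.ne'
    field_simp
    simp [this]
  have hσ' : 1 + σ ≠ 0 := by positivity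
  obtain ⟨t, ht⟩ : ∃ t, t = (1 + σ)⁻¹ := ⟨_, rfl⟩
  obtain ⟨e, he'⟩ : ∃ e, e = (1 - (1 + σ)⁻¹)⁻¹ := ⟨_, rfl⟩
  have hte : t * e = σ⁻¹ := by
    rw [he', he, ht, inv_mul_cancel_left₀ hσ']
  have hweight : ∀ y : EuclideanSpace ℝ (Fin d), σ⁻¹ ^ 2 * (inner ℝ x y - ‖y‖ ^ 2 / 2)
      = t * (e ^ 2 * (inner ℝ (t • x) y - t * (‖y‖ ^ 2 / 2))) := by
    intro y
    rw [← hte, real_inner_smul_left]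
    ring
  rw [mSig_eq_tilted, mSigG_eq hK hp hσ.ne', ← inv_pow, ← he', ← ht]
  simp only [hweight]
  rw [tilted_mean_eq hK hp hφ hexp (by fun_prop)]
  simp only [denoiserExcess, tiltExponent, integral_inner_sub_sq_smul hK hp, ← hte, map_smul, map_sub]
  module

end Denoiser

/-- for `p` supported in `B_R(0)` and any `δ ∈ (0,1)`, there are `σ₀ > 0` with
`1/(1+σ₀) ≤ δ` and a bounded function `H(x,σ) = H̃(x/(1+σ), 1/(1+σ))`, where `H̃` is continuous
and bounded on `B̄_R(0) × [−δ, δ]`, such that `m_σ(x) = m_σ^G(x) + H(x,σ)(1+σ)⁻²` for all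
`x ∈ B̄_R(0)` and `σ ≥ σ₀`. -/
theorem gaussian_plus_excess {d : ℕ} (R : ℝ) (hR : 0 < R)
    (p : Measure (EuclideanSpace ℝ (Fin d))) [IsProbabilityMeasure p]
    (hsupp : p (Metric.ball (0 : EuclideanSpace ℝ (Fin d)) R)ᶜ = 0)
    (δ : ℝ) (hδ : δ ∈ Set.Ioo (0 : ℝ) 1) :
    ∃ σ₀ : ℝ, 0 < σ₀ ∧ 1 / (1 + σ₀) ≤ δ ∧
      ∃ Htil : EuclideanSpace ℝ (Fin d) → ℝ → EuclideanSpace ℝ (Fin d),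
        ContinuousOn (fun q : EuclideanSpace ℝ (Fin d) × ℝ => Htil q.1 q.2)
          (Metric.closedBall 0 R ×ˢ Set.Icc (-δ) δ) ∧
        (∃ C : ℝ, ∀ x ∈ Metric.closedBall (0 : EuclideanSpace ℝ (Fin d)) R,
          ∀ t ∈ Set.Icc (-δ) δ, ‖Htil x t‖ ≤ C) ∧
        ∀ x ∈ Metric.closedBall (0 : EuclideanSpace ℝ (Fin d)) R, ∀ σ : ℝ, σ₀ ≤ σ →
          mSig p σ x = mSigG (meanVec p) (covMatrix p) σ x +
            ((1 + σ) ^ 2)⁻¹ • Htil ((1 + σ)⁻¹ • x) ((1 + σ)⁻¹) := by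
  have hK := isCompact_closedBall (0 : EuclideanSpace ℝ (Fin d)) R
  have hp : p (Metric.closedBall (0 : EuclideanSpace ℝ (Fin d)) R)ᶜ = 0 :=
    measure_mono_null (Set.compl_subset_compl.2 Metric.ball_subset_closedBall) hsupp
  obtain ⟨φ, hφ, hexp⟩ := exists_continuous_exp_eq
  obtain ⟨hδ0, hδ1⟩ := hδ
  have hcont : ContinuousOn
      (fun q : EuclideanSpace ℝ (Fin d) × ℝ => denoiserExcess p φ (q.1, q.2, (1 - q.2)⁻¹))
      (Metric.closedBall 0 R ×ˢ Set.Icc (-δ) δ) := by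
    refine (continuous_denoiserExcess hK hp hφ).comp_continuousOn
      (continuousOn_fst.prodMk (continuousOn_snd.prodMk (ContinuousOn.inv₀ (by fun_prop) ?_)))
    intro q hq
    linarith [hq.2.2]
  refine ⟨δ⁻¹, by positivity, ?_, fun u t => denoiserExcess p φ (u, t, (1 - t)⁻¹), hcont, ?_,
    fun x _ σ hσ => mSig_eq_mSigG_add hK hp hφ hexp ((inv_pos.2 hδ0).trans_le hσ) x⟩
  · rw [one_div]
    exact inv_le_of_inv_le₀ hδ0 (by linarith)
  · obtain ⟨C, hC⟩ := (hK.prod isCompact_Icc).exists_bound_of_continuousOn hcont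
    exact ⟨C, fun x hx t ht => hC (x, t) ⟨hx, ht⟩⟩

end
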